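/- Let 𝒜 be a reduced inverse automaton over Ã, let p, q be states of 𝒜 and let w be a nonempty reduced word over Ã. Let u be the longest prefix of w labeling a path in 𝒜 starting at p and let v be the longest suffix of w labeling a path in 𝒜 ending at q. Suppose |u| + |v| < |w|, so that w = u w' v with w' a nonempty reduced word, and let p' be the endpoint of the u-labeled path from p and q' the start of the v-labeled path into q. Then for every reduced inverse automaton 𝓑, 𝒜 →exp^{(p,w,q)} 𝓑 if and only if 𝒜 →exp^{(p',w',q')} 𝓑, and the latter is a reduced expansion 𝒜 →re^{(p',w',q')} 𝓑. -/

import Mathlib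

open Function

/-- A letter of the symmetrized alphabet Ã: `(a, true)` stands for `a ∈ A` and
`(a, false)` for `a⁻¹ ∈ A⁻¹`. -/
abbrev Ltr (A : Type) := A × Bool

/-- Inversion of letters of Ã. -/
def Ltr.inv {A : Type} (x : Ltr A) : Ltr A := (x.1, !x.2)

/-- The inverse `u⁻¹` of a word `u` over Ã. -/
def wordInv {A : Type} (w : List (Ltr A)) : List (Ltr A) := (w.map Ltr.inv).reverse

/-- A word over Ã is reduced iff it has no factor of the form `a a⁻¹` or `a⁻¹ a`. -/
def IsReducedWord {A : Type} (w : List (Ltr A)) : Prop :=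
  ∀ (u v : List (Ltr A)) (a : A) (b : Bool), w ≠ u ++ (a, b) :: (a, !b) :: v

/-- An automaton over the symmetrized alphabet Ã, with a bundled state type `Q`,
an initial state `q0` and a set `E` of transitions. -/
structure Autom (A : Type) : Type 1 where
  Q : Type
  q0 : Q
  E : Set (Q × Ltr A × Q)

namespace Autom

variable {A : Type}

/-- Paths using only transitions in the set `T`. -/
inductive PathOn (M : Autom A) (T : Set (M.Q × Ltr A × M.Q)) :
    M.Q → List (Ltr A) → M.Q → Prop
  | nil (q : M.Q) : PathOn M T q [] q
  | cons {p q r : M.Q} {a : Ltr A} {w : List (Ltr A)} :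
      (p, a, q) ∈ T → PathOn M T q w r → PathOn M T p (a :: w) r

/-- `M.Path p u q` : the word `u` labels a path from state `p` to state `q` in `M`. -/
def Path (M : Autom A) : M.Q → List (Ltr A) → M.Q → Prop := M.PathOn M.E

/-- The language L(𝒜) of words labeling a path from `q0` to `q0`. -/
def lang (M : Autom A) : Set (List (Ltr A)) := {w | M.Path M.q0 w M.q0}

/-- The set L(𝒜)ρ of reductions (in the free group `F(A)`) of words of L(𝒜). -/
def langRho (M : Autom A) : Set (FreeGroup A) := FreeGroup.mk '' M.lang

/-- Dual automaton: `(p,a,q)` is an edge iff `(q,a⁻¹,p)` is one. -/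
def Dual (M : Autom A) : Prop := ∀ p a q, (p, a, q) ∈ M.E ↔ (q, Ltr.inv a, p) ∈ M.E

/-- Deterministic automaton. -/
def Deterministic (M : Autom A) : Prop :=
  ∀ p a q q', (p, a, q) ∈ M.E → (p, a, q') ∈ M.E → q = q'

/-- Trim automaton: every state lies on a path from `q0` to `q0`. -/
def Trim (M : Autom A) : Prop := ∀ q, ∃ u v, M.Path M.q0 u q ∧ M.Path q v M.q0

/-- Inverse automaton: deterministic, trim and dual. -/
def IsInv (M : Autom A) : Prop := M.Deterministic ∧ M.Trim ∧ M.Dual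

/-- Reduced automaton: every state lies on a path from `q0` to `q0` labeled by
a reduced word. -/
def IsRed (M : Autom A) : Prop :=
  ∀ q, ∃ u v, IsReducedWord (u ++ v) ∧ M.Path M.q0 u q ∧ M.Path q v M.q0

/-- Homomorphisms of automata. -/
def IsHom (M N : Autom A) (φ : M.Q → N.Q) : Prop :=
  φ M.q0 = N.q0 ∧ ∀ p a q, (p, a, q) ∈ M.E → (φ p, a, φ q) ∈ N.E

/-- Isomorphism of automata. -/
def Isomorphic (M N : Autom A) : Prop :=
  ∃ φ : M.Q ≃ N.Q, M.IsHom N φ ∧ N.IsHom M φ.symm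

/-- `N` is (isomorphic to) the automaton obtained from `M` by identifying the two
states `p` and `q`. -/
def IsIdentification (M : Autom A) (p q : M.Q) (N : Autom A) : Prop :=
  ∃ φ : M.Q → N.Q,
    Surjective φ ∧ φ M.q0 = N.q0 ∧
    (∀ x y, φ x = φ y ↔ x = y ∨ (x = p ∧ y = q) ∨ (x = q ∧ y = p)) ∧
    (∀ e : N.Q × Ltr A × N.Q, e ∈ N.E ↔ ∃ e' ∈ M.E, e = (φ e'.1, e'.2.1, φ e'.2.2))

/-- `N` is (isomorphic to) the automaton obtained from `M` by deleting the state `q`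
and all transitions involving it. -/
def IsDeletion (M : Autom A) (q : M.Q) (N : Autom A) : Prop :=
  ∃ φ : N.Q → M.Q,
    Injective φ ∧ Set.range φ = {x | x ≠ q} ∧ φ N.q0 = M.q0 ∧
    (∀ e : N.Q × Ltr A × N.Q, e ∈ N.E ↔ (φ e.1, e.2.1, φ e.2.2) ∈ M.E)

/-- Elementary reduction of type 1. -/
def Red1 (M N : Autom A) : Prop :=
  ∃ p q r a, p ≠ q ∧ (r, a, p) ∈ M.E ∧ (r, a, q) ∈ M.E ∧ M.IsIdentification p q N

/-- Elementary reduction of type 2. -/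
def Red2 (M N : Autom A) : Prop :=
  ∃ (p q : M.Q) (a : Ltr A), q ≠ M.q0 ∧ (p, a, q) ∈ M.E ∧ (q, Ltr.inv a, p) ∈ M.E ∧
    (∀ e ∈ M.E, e.1 = q ∨ e.2.2 = q → e = (p, a, q) ∨ e = (q, Ltr.inv a, p)) ∧
    M.IsDeletion q N

/-- `N` is (isomorphic to) the reduction `Mρ` of `M`: perform elementary reductions
of type 1 until the automaton is deterministic, then elementary reductions of type 2
until none is possible. -/
def ReductionOf (M N : Autom A) : Prop :=
  ∃ M₁, Relation.ReflTransGen Red1 M M₁ ∧ M₁.Deterministic ∧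
    Relation.ReflTransGen Red2 M₁ N ∧ ∀ N', ¬ Red2 N N'

/-- `N` is (isomorphic to) the expansion of `M` by `(p, w, q)`: a new path labeled `w`
from `p` to `q` (together with its inverse path) whose intermediate states are new. -/
def IsExpansion (M : Autom A) (p : M.Q) (w : List (Ltr A)) (q : M.Q) (N : Autom A) : Prop :=
  w ≠ [] ∧
  ∃ (φ : M.Q → N.Q) (c : Fin (w.length + 1) → N.Q),
    Injective φ ∧ φ M.q0 = N.q0 ∧ c 0 = φ p ∧ c (Fin.last w.length) = φ q ∧
    (∀ i : Fin (w.length + 1), 0 < (i : ℕ) → (i : ℕ) < w.length → c i ∉ Set.range φ) ∧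
    (∀ i j : Fin (w.length + 1), 0 < (i : ℕ) → (i : ℕ) < w.length → c i = c j → i = j) ∧
    (∀ x : N.Q, (∃ y, φ y = x) ∨ ∃ i, c i = x) ∧
    (∀ e : N.Q × Ltr A × N.Q, e ∈ N.E ↔
      ((∃ e' ∈ M.E, e = (φ e'.1, e'.2.1, φ e'.2.2)) ∨
        ∃ i : Fin w.length,
          e = (c i.castSucc, w.get i, c i.succ) ∨
          e = (c i.succ, Ltr.inv (w.get i), c i.castSucc)))

/-- `M →exp^{(p,w,q)} N` : `N` is (isomorphic to) the reduction of the expansion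
of `M` by `(p,w,q)`. -/
def ExpStep (M : Autom A) (p : M.Q) (w : List (Ltr A)) (q : M.Q) (N : Autom A) : Prop :=
  ∃ N' N'', M.IsExpansion p w q N' ∧ ReductionOf N' N'' ∧ Isomorphic N'' N

/-- `M →re^{(p,w,q)} N` : a reduced expansion, i.e. an expansion-then-reduction in which
`M` embeds in `N`. -/
def REStep (M : Autom A) (p : M.Q) (w : List (Ltr A)) (q : M.Q) (N : Autom A) : Prop :=
  M.ExpStep p w q N ∧ ∃ ψ : M.Q → N.Q, Injective ψ ∧ M.IsHom N ψ

/-- `M →e^{w} N` : an e-step, i.e. `M →exp^{(q0,w,q0)} N`. -/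
def EStep (M : Autom A) (w : List (Ltr A)) (N : Autom A) : Prop :=
  M.ExpStep M.q0 w M.q0 N

/-- `M →i^{p=q} N` : an i-step; `N` is (isomorphic to) the reduction of the automaton
obtained from `M` by identifying the distinct states `p` and `q`. -/
def IStep (M : Autom A) (p q : M.Q) (N : Autom A) : Prop :=
  p ≠ q ∧ ∃ N' N'', M.IsIdentification p q N' ∧ ReductionOf N' N'' ∧ Isomorphic N'' N

/-- i-step, allowing `p = q` (in which case nothing happens). -/
def IStep' (M : Autom A) (p q : M.Q) (N : Autom A) : Prop :=
  (p = q ∧ M.Isomorphic N) ∨ M.IStep p q N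

/-- `M →i N` : some i-step applies. -/
def IStepAny (M N : Autom A) : Prop := ∃ p q, M.IStep p q N

/-- Some reduced expansion (by a nonempty reduced word) applies. -/
def REStepAny (M N : Autom A) : Prop :=
  ∃ p w q, IsReducedWord w ∧ M.REStep p w q N

/-- `M` is (isomorphic to) `Γ_A(H)` : a reduced inverse automaton with `L(M)ρ = H`. -/
def Represents (M : Autom A) (H : Subgroup (FreeGroup A)) : Prop :=
  M.IsInv ∧ M.IsRed ∧ M.langRho = ↑H

/-- The `q0`-diameter of an automaton: the maximum over all states `q` of the minimal
length of a reduced word labeling a path from `q0` to `q`. -/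
noncomputable def diam (M : Autom A) : ℕ :=
  ⨆ q : M.Q, sInf {n | ∃ u, IsReducedWord u ∧ u.length = n ∧ M.Path M.q0 u q}

end Autom

/-- `S` is a basis of the subgroup `H`: `S` generates `H` and freely so. -/
def IsFreeBasis {G : Type} [Group G] (S : Set G) (H : Subgroup G) : Prop :=
  Subgroup.closure S = H ∧
    Injective (FreeGroup.lift (Subtype.val : S → G) : FreeGroup S →* G)

/-- `H ≤ff K` : `H` is a free factor of `K`. -/
def FreeFactor {G : Type} [Group G] (H K : Subgroup G) : Prop :=
  ∃ B C : Set G, IsFreeBasis B H ∧ IsFreeBasis C K ∧ B ⊆ C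

/-- The rank of a subgroup: the cardinality of a basis (the common value of
the cardinalities of all bases, when `H` is a finite-rank free group). -/
noncomputable def rk {G : Type} [Group G] (H : Subgroup G) : ℕ :=
  sInf {n | ∃ S : Set G, IsFreeBasis S H ∧ S.ncard = n}

/-- `L` is a graphical free factor of `K` with respect to `A`: `Γ_A(L)` embeds
in `Γ_A(K)`. -/
def GraphicalFF {A : Type} (L K : Subgroup (FreeGroup A)) : Prop :=
  L ≤ K ∧ ∃ ML MK : Autom A, ML.Represents L ∧ MK.Represents K ∧
    ∃ ψ : ML.Q → MK.Q, Injective ψ ∧ ML.IsHom MK ψ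

/-- A step (i-step or reduced expansion) from `M` to `N` of cost `c`. -/
def StepCost {A : Type} (M N : Autom A) (c : ℕ) : Prop :=
  (c = 0 ∧ Autom.IStepAny M N) ∨
  (∃ p w q, IsReducedWord w ∧ w.length = c ∧ M.REStep p w q N)

/-- The well-order `≺` on cost sequences. -/
def costLT (k l : List ℕ) : Prop :=
  k.length < l.length ∨
  (k.length = l.length ∧ k.sum < l.sum) ∨
  (k.length = l.length ∧ k.sum = l.sum ∧ List.Lex (· < ·) k l)

namespace Autom

variable {A : Type}

theorem ltr_inv_inv (a : Ltr A) : Ltr.inv (Ltr.inv a) = a := by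
  simp [Ltr.inv]

theorem ltr_inv_ne (a : Ltr A) : Ltr.inv a ≠ a := by
  intro h
  have := congrArg Prod.snd h
  simp [Ltr.inv] at this

theorem path_append {M : Autom A} {u v : List (Ltr A)} {p q : M.Q} :
    M.Path p (u ++ v) q ↔ ∃ r, M.Path p u r ∧ M.Path r v q := by
  induction u generalizing p with
  | nil =>
    constructor
    · intro h; exact ⟨p, .nil p, h⟩
    · rintro ⟨r, h1, h2⟩; cases h1; exact h2
  | cons a u ih =>
    constructor
    · intro h
      cases h with
      | cons he hp =>
        obtain ⟨r, h1, h2⟩ := ih.1 hp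
        exact ⟨r, .cons he h1, h2⟩
    · rintro ⟨r, h1, h2⟩
      cases h1 with
      | cons he hp => exact .cons he (ih.2 ⟨r, hp, h2⟩)

theorem path_single {M : Autom A} {a : Ltr A} {p q : M.Q} :
    M.Path p [a] q ↔ (p, a, q) ∈ M.E := by
  constructor
  · intro h
    cases h with
    | cons he hp => cases hp; exact he
  · intro h; exact .cons h (.nil _)

theorem path_hom {M N : Autom A} {f : M.Q → N.Q} (hf : M.IsHom N f)
    {u : List (Ltr A)} {p q : M.Q} (h : M.Path p u q) : N.Path (f p) u (f q) := by
  unfold Path at h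
  induction h with
  | nil q => exact .nil _
  | cons he _ ih => exact .cons (hf.2 _ _ _ he) ih

theorem path_det {M : Autom A} (hd : M.Deterministic) {u : List (Ltr A)} {p q q' : M.Q}
    (h : M.Path p u q) (h' : M.Path p u q') : q = q' := by
  unfold Path at h
  induction h with
  | nil q => cases h'; rfl
  | cons he _ ih =>
    cases h' with
    | cons he' hp' =>
      have := hd _ _ _ _ he he'
      subst this
      exact ih hp'

theorem path_codet {M : Autom A} (hd : M.Deterministic) (hdu : M.Dual)
    {u : List (Ltr A)} {p p' q : M.Q}
    (h : M.Path p u q) (h' : M.Path p' u q) : p = p' := by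
  unfold Path at h
  induction h generalizing p' with
  | nil q => cases h'; rfl
  | cons he _ ih =>
    cases h' with
    | cons he' hp' =>
      have := ih hp'
      subst this
      exact hd _ _ _ _ ((hdu _ _ _).1 he) ((hdu _ _ _).1 he')

theorem path_states {M : Autom A} {u : List (Ltr A)} {p q : M.Q} (h : M.Path p u q) :
    ∃ d : ℕ → M.Q, d 0 = p ∧ d u.length = q ∧
      ∀ i (hi : i < u.length), (d i, u[i], d (i + 1)) ∈ M.E := by
  unfold Path at h
  induction h with
  | nil q => exact ⟨fun _ => q, rfl, rfl, fun i hi => absurd hi (by simp)⟩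
  | @cons p q r a w he _ ih =>
    obtain ⟨d, h0, hl, hE⟩ := ih
    refine ⟨fun i => Nat.casesOn i p d, rfl, hl, ?_⟩
    intro i hi
    cases i with
    | zero => simpa [h0] using he
    | succ i => exact hE i (by simpa using hi)

theorem states_path {M : Autom A} {u : List (Ltr A)} (d : ℕ → M.Q)
    (hE : ∀ i (hi : i < u.length), (d i, u[i], d (i + 1)) ∈ M.E) :
    M.Path (d 0) u (d u.length) := by
  induction u generalizing d with
  | nil => exact .nil _
  | cons a u ih =>
    refine .cons (hE 0 (by simp)) ?_
    exact ih (fun i => d (i + 1)) (fun i hi => hE (i + 1) (by simpa using hi))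

theorem hom_comp {M N K : Autom A} {f : M.Q → N.Q} {g : N.Q → K.Q}
    (hf : M.IsHom N f) (hg : N.IsHom K g) : M.IsHom K (g ∘ f) :=
  ⟨by simp [hf.1, hg.1], fun _ _ _ h => hg.2 _ _ _ (hf.2 _ _ _ h)⟩

/-! ### Expansions -/

theorem expansion_exists (M : Autom A) (p q : M.Q) (w : List (Ltr A)) (hw : w ≠ []) :
    ∃ E, M.IsExpansion p w q E := by
  have hlen : 0 < w.length := List.length_pos_iff.2 hw
  let c : Fin (w.length + 1) → M.Q ⊕ {i : ℕ // 0 < i ∧ i < w.length} := fun i =>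
    if h : 0 < (i : ℕ) ∧ (i : ℕ) < w.length then Sum.inr ⟨i, h⟩
    else if (i : ℕ) = 0 then Sum.inl p else Sum.inl q
  refine ⟨⟨M.Q ⊕ {i : ℕ // 0 < i ∧ i < w.length}, Sum.inl M.q0,
    {e | (∃ e' ∈ M.E, e = (Sum.inl e'.1, e'.2.1, Sum.inl e'.2.2)) ∨
        ∃ i : Fin w.length,
          e = (c i.castSucc, w.get i, c i.succ) ∨
          e = (c i.succ, Ltr.inv (w.get i), c i.castSucc)}⟩, hw, Sum.inl, c,
    Sum.inl_injective, rfl, by simp [c], ?_, ?_, ?_, ?_, fun e => Iff.rfl⟩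
  · simp [c, hlen.ne']
  · rintro i h0 h1 ⟨y, hy⟩
    simp only [c, dif_pos (And.intro h0 h1)] at hy
    cases hy
  · intro i j h0 h1 hij
    by_cases hj : 0 < (j : ℕ) ∧ (j : ℕ) < w.length
    · simp only [c, h0, h1, hj, and_self, dite_true] at hij
      have := Sum.inr_injective hij
      simp only [Subtype.mk.injEq] at this
      exact Fin.ext this
    · simp only [c, h0, h1, and_self, dite_true, dif_neg hj] at hij
      split_ifs at hij
  · rintro (x | ⟨i, h0, h1⟩)
    · exact Or.inl ⟨x, rfl⟩
    · exact Or.inr ⟨⟨i, by omega⟩, by simp only [c, dif_pos (And.intro h0 h1)]⟩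

theorem expansion_props {M E : Autom A} {p q : M.Q} {w : List (Ltr A)}
    (hM : M.Dual) (h : M.IsExpansion p w q E) :
    ∃ φ : M.Q → E.Q, M.IsHom E φ ∧ E.Dual ∧ E.Path (φ p) w (φ q) ∧ (Set.range φ)ᶜ.Finite ∧
      (∀ (P : Autom A) (ψ : M.Q → P.Q), P.Dual → M.IsHom P ψ → P.Path (ψ p) w (ψ q) →
        ∃ g, E.IsHom P g ∧ g ∘ φ = ψ) ∧
      (∀ (P : Autom A) (g₁ g₂ : E.Q → P.Q), P.Deterministic → E.IsHom P g₁ → E.IsHom P g₂ →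
        g₁ ∘ φ = g₂ ∘ φ → g₁ = g₂) := by
  obtain ⟨hw, φ, c, hinj, hq0, hc0, hcl, hnr, hcinj, hcov, hE⟩ := h
  have hφ : M.IsHom E φ := ⟨hq0, fun p a q h => (hE _).2 (Or.inl ⟨_, h, rfl⟩)⟩
  have hc1 : ∀ i : Fin w.length, (c i.castSucc, w.get i, c i.succ) ∈ E.E :=
    fun i => (hE _).2 (Or.inr ⟨i, Or.inl rfl⟩)
  refine ⟨φ, hφ, ?_, ?_, ?_, ?_, ?_⟩
  · have key : ∀ p a q, (p, a, q) ∈ E.E → (q, Ltr.inv a, p) ∈ E.E := by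
      intro p a q h
      rcases (hE _).1 h with ⟨⟨x, b, y⟩, he', heq⟩ | ⟨i, heq | heq⟩
      · simp only [Prod.mk.injEq] at heq
        obtain ⟨rfl, rfl, rfl⟩ := heq
        exact (hE _).2 (Or.inl ⟨_, (hM _ _ _).1 he', rfl⟩)
      · simp only [Prod.mk.injEq] at heq
        obtain ⟨rfl, rfl, rfl⟩ := heq
        exact (hE _).2 (Or.inr ⟨i, Or.inr rfl⟩)
      · simp only [Prod.mk.injEq] at heq
        obtain ⟨rfl, rfl, rfl⟩ := heq
        exact (hE _).2 (Or.inr ⟨i, Or.inl (by rw [ltr_inv_inv])⟩)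
    intro p a q
    refine ⟨key p a q, fun h => ?_⟩
    have := key _ _ _ h
    rwa [ltr_inv_inv] at this
  · have := states_path (M := E) (u := w)
      (fun i => if h : i < w.length + 1 then c ⟨i, h⟩ else E.q0) (by
        intro i hi
        have h1 : i < w.length + 1 := by omega
        have h2 : i + 1 < w.length + 1 := by omega
        simp only [h1, h2, dite_true]
        exact hc1 ⟨i, hi⟩)
    simp only [Nat.zero_lt_succ, Nat.lt_succ_self, dite_true] at this
    rw [← hc0, ← hcl]
    exact this
  · refine (Set.finite_range c).subset ?_
    intro x hx
    rcases hcov x with h | h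
    · exact absurd h hx
    · exact h
  · intro P ψ hP hψ hpath
    obtain ⟨d, hd0, hdl, hdE⟩ := path_states hpath
    classical
    let g : E.Q → P.Q := fun x =>
      if h : ∃ y, φ y = x then ψ h.choose
      else if h' : ∃ i, c i = x then d (h'.choose : ℕ) else P.q0
    have g1 : ∀ y, g (φ y) = ψ y := by
      intro y
      have hy : ∃ z, φ z = φ y := ⟨y, rfl⟩
      simp only [g, dif_pos hy]
      rw [hinj hy.choose_spec]
    have g2 : ∀ i : Fin (w.length + 1), g (c i) = d i := by
      intro i
      by_cases h0 : (i : ℕ) = 0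
      · have : i = 0 := Fin.ext h0
        subst this
        rw [hc0, g1]; simp [hd0]
      by_cases h1 : (i : ℕ) = w.length
      · have : i = Fin.last _ := Fin.ext h1
        subst this
        rw [hcl, g1]; simp [hdl]
      have h0' : 0 < (i : ℕ) := by omega
      have h1' : (i : ℕ) < w.length := by have := i.2; omega
      have hn : ¬ ∃ y, φ y = c i := hnr i h0' h1'
      have hex : ∃ j, c j = c i := ⟨i, rfl⟩
      simp only [g, dif_neg hn, dif_pos hex]
      have := hcinj i hex.choose h0' h1' hex.choose_spec.symm
      rw [← this]
    refine ⟨g, ⟨by rw [← hq0, g1, hψ.1], ?_⟩, funext g1⟩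
    intro x a y h
    rcases (hE _).1 h with ⟨⟨x, b, y⟩, he', heq⟩ | ⟨i, heq | heq⟩
    · simp only [Prod.mk.injEq] at heq
      obtain ⟨rfl, rfl, rfl⟩ := heq
      rw [g1, g1]
      exact hψ.2 _ _ _ he'
    · simp only [Prod.mk.injEq] at heq
      obtain ⟨rfl, rfl, rfl⟩ := heq
      rw [g2, g2]
      exact hdE i i.2
    · simp only [Prod.mk.injEq] at heq
      obtain ⟨rfl, rfl, rfl⟩ := heq
      rw [g2, g2]
      exact (hP _ _ _).1 (hdE i i.2)
  · intro P g₁ g₂ hP h1 h2 heq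
    have hφe : ∀ y, g₁ (φ y) = g₂ (φ y) := fun y => congrFun heq y
    have hce : ∀ n (hn : n < w.length + 1), g₁ (c ⟨n, hn⟩) = g₂ (c ⟨n, hn⟩) := by
      intro n
      induction n with
      | zero =>
        intro hn
        have : (⟨0, hn⟩ : Fin (w.length + 1)) = 0 := rfl
        rw [this, hc0, hφe]
      | succ n ih =>
        intro hn
        have hE' := hc1 ⟨n, by omega⟩
        have e1 := h1.2 _ _ _ hE'
        have e2 := h2.2 _ _ _ hE'
        have ih' := ih (by omega)
        change (g₁ (c ⟨n, by omega⟩), _, g₁ (c ⟨n + 1, hn⟩)) ∈ _ at e1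
        change (g₂ (c ⟨n, by omega⟩), _, g₂ (c ⟨n + 1, hn⟩)) ∈ _ at e2
        rw [ih'] at e1
        exact hP _ _ _ _ e1 e2
    funext x
    rcases hcov x with ⟨y, rfl⟩ | ⟨i, rfl⟩
    · exact hφe y
    · exact hce i i.2

/-! ### Foldings -/

/-- `K` is a quotient of `E`, through which every map to a deterministic automaton factors. -/
def Fold (E K : Autom A) : Prop :=
  ∃ π : E.Q → K.Q, Surjective π ∧ π E.q0 = K.q0 ∧
    (∀ e : K.Q × Ltr A × K.Q, e ∈ K.E ↔ ∃ e' ∈ E.E, e = (π e'.1, e'.2.1, π e'.2.2)) ∧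
    ∀ (P : Autom A) (g : E.Q → P.Q), P.Deterministic → E.IsHom P g →
      ∃ h, K.IsHom P h ∧ h ∘ π = g

theorem fold_refl (E : Autom A) : Fold E E :=
  ⟨id, surjective_id, rfl, fun e => ⟨fun h => ⟨e, h, rfl⟩, by rintro ⟨e', h, rfl⟩; exact h⟩,
    fun _ g _ hg => ⟨g, hg, rfl⟩⟩

theorem fold_trans {E K L : Autom A} (h1 : Fold E K) (h2 : Fold K L) : Fold E L := by
  obtain ⟨π, s1, q1, e1, u1⟩ := h1
  obtain ⟨σ, s2, q2, e2, u2⟩ := h2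
  refine ⟨σ ∘ π, s2.comp s1, by simp [q1, q2], ?_, ?_⟩
  · intro e
    rw [e2]
    constructor
    · rintro ⟨e', he', rfl⟩
      obtain ⟨e'', he'', rfl⟩ := (e1 _).1 he'
      exact ⟨e'', he'', rfl⟩
    · rintro ⟨e'', he'', rfl⟩
      exact ⟨_, (e1 _).2 ⟨e'', he'', rfl⟩, rfl⟩
  · intro P g hP hg
    obtain ⟨h, hh, rfl⟩ := u1 P g hP hg
    obtain ⟨k, hk, rfl⟩ := u2 P h hP hh
    exact ⟨k, hk, rfl⟩

theorem fold_of_red1 {E K : Autom A} (h : Red1 E K) : Fold E K := by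
  obtain ⟨p, q, r, a, hpq, hp, hq, π, hs, hq0, hker, hE⟩ := h
  refine ⟨π, hs, hq0, hE, ?_⟩
  intro P g hP hg
  have hgpq : g p = g q := hP _ _ _ _ (hg.2 _ _ _ hp) (hg.2 _ _ _ hq)
  have hk : ∀ x y, π x = π y → g x = g y := by
    intro x y hxy
    rcases (hker x y).1 hxy with rfl | ⟨rfl, rfl⟩ | ⟨rfl, rfl⟩
    · rfl
    · exact hgpq
    · exact hgpq.symm
  have hh : ∀ x, g (surjInv hs (π x)) = g x := fun x => hk _ _ (surjInv_eq hs _)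
  refine ⟨fun z => g (surjInv hs z), ⟨?_, ?_⟩, funext hh⟩
  · rw [← hq0]; exact (hh _).trans hg.1
  · intro x b y hxy
    obtain ⟨⟨x', b', y'⟩, he', heq⟩ := (hE _).1 hxy
    simp only [Prod.mk.injEq] at heq
    obtain ⟨rfl, rfl, rfl⟩ := heq
    simp only [hh]
    exact hg.2 _ _ _ he'

theorem fold_of_red1s {E K : Autom A} (h : Relation.ReflTransGen Red1 E K) : Fold E K := by
  induction h with
  | refl => exact fold_refl _
  | tail _ h ih => exact fold_trans ih (fold_of_red1 h)

/-- The universal property of the folded expansion. -/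
def UnivFold (M : Autom A) (p : M.Q) (w : List (Ltr A)) (q : M.Q) (K : Autom A) : Prop :=
  K.Deterministic ∧ K.Dual ∧ ∃ φ : M.Q → K.Q, M.IsHom K φ ∧ K.Path (φ p) w (φ q) ∧
    (∀ (P : Autom A) (ψ : M.Q → P.Q), P.Deterministic → P.Dual → M.IsHom P ψ →
      P.Path (ψ p) w (ψ q) → ∃ g, K.IsHom P g ∧ g ∘ φ = ψ) ∧
    (∀ (P : Autom A) (g₁ g₂ : K.Q → P.Q), P.Deterministic → K.IsHom P g₁ → K.IsHom P g₂ →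
        g₁ ∘ φ = g₂ ∘ φ → g₁ = g₂)

theorem univFold_of {M E K : Autom A} {p q : M.Q} {w : List (Ltr A)}
    (hM : M.Dual) (hE : M.IsExpansion p w q E) (hF : Fold E K) (hK : K.Deterministic) :
    UnivFold M p w q K := by
  obtain ⟨φ, hφ, hdual, hpath, -, hu, huniq⟩ := expansion_props hM hE
  obtain ⟨π, hs, hq0, hEK, hlift⟩ := hF
  have hπ : E.IsHom K π := ⟨hq0, fun p a q h => (hEK _).2 ⟨_, h, rfl⟩⟩
  refine ⟨hK, ?_, π ∘ φ, hom_comp hφ hπ, path_hom hπ hpath, ?_, ?_⟩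
  · have key : ∀ p a q, (p, a, q) ∈ K.E → (q, Ltr.inv a, p) ∈ K.E := by
      intro p a q h
      obtain ⟨⟨x, b, y⟩, he', heq⟩ := (hEK _).1 h
      simp only [Prod.mk.injEq] at heq
      obtain ⟨rfl, rfl, rfl⟩ := heq
      exact hπ.2 _ _ _ ((hdual _ _ _).1 he')
    intro p a q
    refine ⟨key p a q, fun h => ?_⟩
    have := key _ _ _ h
    rwa [ltr_inv_inv] at this
  · intro P ψ hP hPd hψ hpth
    obtain ⟨g, hg, rfl⟩ := hu P ψ hPd hψ hpth
    obtain ⟨h, hh, rfl⟩ := hlift P g hP hg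
    exact ⟨h, hh, rfl⟩
  · intro P g₁ g₂ hP h1 h2 heq
    have := huniq P (g₁ ∘ π) (g₂ ∘ π) hP (hom_comp hπ h1) (hom_comp hπ h2) heq
    exact hs.injective_comp_right this

theorem univFold_iso {M K L : Autom A} {p q : M.Q} {w : List (Ltr A)}
    (hK : UnivFold M p w q K) (hL : UnivFold M p w q L) : Isomorphic K L := by
  obtain ⟨kd, kD, φ, hφ, kp, ku, kn⟩ := hK
  obtain ⟨ld, lD, ψ, hψ, lp, lu, ln⟩ := hL
  obtain ⟨g, hg, hgc⟩ := ku L ψ ld lD hψ lp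
  obtain ⟨h, hh, hhc⟩ := lu K φ kd kD hφ kp
  have h1 : h ∘ g = id := by
    refine kn K _ _ kd (hom_comp hg hh) ⟨rfl, fun _ _ _ h => h⟩ ?_
    rw [comp_assoc, hgc, hhc]; rfl
  have h2 : g ∘ h = id := by
    refine ln L _ _ ld (hom_comp hh hg) ⟨rfl, fun _ _ _ h => h⟩ ?_
    rw [comp_assoc, hhc, hgc]; rfl
  exact ⟨⟨g, h, congrFun h1, congrFun h2⟩, hg, hh⟩

theorem univFold_congr {M K : Autom A} {p q p₁ q₁ : M.Q} {w w₁ : List (Ltr A)}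
    (heq : ∀ (P : Autom A) (ψ : M.Q → P.Q), P.Deterministic → P.Dual → M.IsHom P ψ →
      (P.Path (ψ p) w (ψ q) ↔ P.Path (ψ p₁) w₁ (ψ q₁)))
    (hK : UnivFold M p w q K) : UnivFold M p₁ w₁ q₁ K := by
  obtain ⟨kd, kD, φ, hφ, kp, ku, kn⟩ := hK
  exact ⟨kd, kD, φ, hφ, (heq K φ kd kD hφ).1 kp,
    fun P ψ h1 h2 h3 h4 => ku P ψ h1 h2 h3 ((heq P ψ h1 h2 h3).2 h4), kn⟩

theorem identification_exists (M : Autom A) (p q : M.Q) :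
    ∃ N, M.IsIdentification p q N := by
  let s : Setoid M.Q :=
    ⟨fun x y => x = y ∨ (x = p ∧ y = q) ∨ (x = q ∧ y = p), by
      constructor
      · intro x; exact Or.inl rfl
      · rintro x y (rfl | ⟨rfl, rfl⟩ | ⟨rfl, rfl⟩) <;> simp
      · rintro x y z (rfl | ⟨rfl, rfl⟩ | ⟨rfl, rfl⟩) (rfl | ⟨h, rfl⟩ | ⟨h, rfl⟩) <;> simp [*]⟩
  refine ⟨⟨Quotient s, Quotient.mk s M.q0,
    {e | ∃ e' ∈ M.E, e = (Quotient.mk s e'.1, e'.2.1, Quotient.mk s e'.2.2)}⟩,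
    Quotient.mk s, Quotient.mk_surjective, rfl, ?_, fun e => Iff.rfl⟩
  intro x y
  exact Quotient.eq (r := s)

theorem fold_exists_aux {M P : Autom A} (hP : P.Deterministic) (n : ℕ) :
    ∀ (E : Autom A) (φ : M.Q → E.Q) (g : E.Q → P.Q), (Set.range φ)ᶜ.Finite →
      (Set.range φ)ᶜ.ncard = n → E.IsHom P g → Injective (g ∘ φ) →
      ∃ K, Relation.ReflTransGen Red1 E K ∧ K.Deterministic := by
  induction n using Nat.strong_induction_on with
  | _ n ih =>
  intro E φ g hfin hn hg hinj
  by_cases hd : E.Deterministic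
  · exact ⟨E, .refl, hd⟩
  unfold Deterministic at hd
  push Not at hd
  obtain ⟨r, a, x, y, hx, hy, hxy⟩ := hd
  obtain ⟨E', hid⟩ := identification_exists E x y
  have hred : Red1 E E' := ⟨x, y, r, a, hxy, hx, hy, hid⟩
  have hid' := hid
  obtain ⟨π, hs, hq0, hker, hE'⟩ := hid
  have hgxy : g x = g y := hP _ _ _ _ (hg.2 _ _ _ hx) (hg.2 _ _ _ hy)
  have hk : ∀ x y, π x = π y → g x = g y := by
    intro x y hxy
    rcases (hker x y).1 hxy with rfl | ⟨rfl, rfl⟩ | ⟨rfl, rfl⟩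
    · rfl
    · exact hgxy
    · exact hgxy.symm
  have hh : ∀ x, g (surjInv hs (π x)) = g x := fun x => hk _ _ (surjInv_eq hs _)
  have hπxy : π x = π y := (hker x y).2 (Or.inr (Or.inl ⟨rfl, rfl⟩))
  have key : ∃ z z', z ≠ z' ∧ π z = π z' ∧ z ∉ Set.range φ := by
    by_cases hxr : x ∈ Set.range φ
    · refine ⟨y, x, hxy.symm, hπxy.symm, ?_⟩
      rintro ⟨y', rfl⟩
      obtain ⟨x', rfl⟩ := hxr
      exact hxy (congrArg φ (hinj hgxy))
    · exact ⟨x, y, hxy, hπxy, hxr⟩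
  obtain ⟨z, z', hzz, hπz, hz⟩ := key
  have hsub : (Set.range (π ∘ φ))ᶜ ⊆ π '' ((Set.range φ)ᶜ \ {z}) := by
    intro t ht
    obtain ⟨k, rfl⟩ := hs t
    have hr : ∀ k', π k' = π k → k' ∉ Set.range φ := by
      rintro k' hk' ⟨m, rfl⟩
      exact ht ⟨m, hk'⟩
    by_cases hkz : k = z
    · subst hkz
      exact ⟨z', ⟨hr _ hπz.symm, fun h => hzz h.symm⟩, hπz.symm⟩
    · exact ⟨k, ⟨hr _ rfl, hkz⟩, rfl⟩
  have hfin2 : ((Set.range φ)ᶜ \ {z}).Finite := hfin.sdiff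
  have hlt : (Set.range (π ∘ φ))ᶜ.ncard < n := by
    calc _ ≤ (π '' ((Set.range φ)ᶜ \ {z})).ncard := Set.ncard_le_ncard hsub (hfin2.image _)
      _ ≤ ((Set.range φ)ᶜ \ {z}).ncard := Set.ncard_image_le hfin2
      _ < (Set.range φ)ᶜ.ncard := Set.ncard_sdiff_singleton_lt_of_mem hz hfin
      _ = n := hn
  obtain ⟨K, hK, hKd⟩ := ih _ hlt E' (π ∘ φ) (fun t => g (surjInv hs t))
    ((hfin2.image _).subset hsub) rfl ⟨by rw [← hq0]; exact (hh _).trans hg.1, by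
      intro x b y hxy
      obtain ⟨⟨x', b', y'⟩, he', heq⟩ := (hE' _).1 hxy
      simp only [Prod.mk.injEq] at heq
      obtain ⟨rfl, rfl, rfl⟩ := heq
      simp only [hh]
      exact hg.2 _ _ _ he'⟩ (by
      intro a b hab
      simp only [comp_apply, hh] at hab
      exact hinj hab)
  exact ⟨K, .head hred hK, hKd⟩

/-! ### Transport of type 2 reductions -/

theorem iso_symm {M N : Autom A} (h : Isomorphic M N) : Isomorphic N M := by
  obtain ⟨φ, h1, h2⟩ := h
  exact ⟨φ.symm, h2, by simpa using h1⟩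

theorem iso_trans {M N K : Autom A} (h : Isomorphic M N) (h' : Isomorphic N K) :
    Isomorphic M K := by
  obtain ⟨φ, h1, h2⟩ := h
  obtain ⟨ψ, h3, h4⟩ := h'
  exact ⟨φ.trans ψ, hom_comp (f := φ) (g := ψ) h1 h3,
    hom_comp (f := ψ.symm) (g := φ.symm) h4 h2⟩

theorem red2_iso {M M' N : Autom A} (h : Isomorphic M M') (hr : Red2 M N) : Red2 M' N := by
  obtain ⟨f, hf, hf'⟩ := h
  have hmem : ∀ x a y, (f x, a, f y) ∈ M'.E ↔ (x, a, y) ∈ M.E := fun x a y =>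
    ⟨fun h => by simpa using hf'.2 _ _ _ h, fun h => hf.2 _ _ _ h⟩
  obtain ⟨p, q, a, hq, h1, h2, h3, φ, hinj, hrange, hq0, hE⟩ := hr
  refine ⟨f p, f q, a, ?_, hf.2 _ _ _ h1, hf.2 _ _ _ h2, ?_, f ∘ φ, f.injective.comp hinj,
    ?_, ?_, ?_⟩
  · rw [← hf.1]; exact fun h => hq (f.injective h)
  · rintro ⟨x, b, y⟩ he hor
    obtain ⟨x, rfl⟩ := f.surjective x
    obtain ⟨y, rfl⟩ := f.surjective y
    have := h3 (x, b, y) ((hmem _ _ _).1 he) (by simpa using hor)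
    simpa using this
  · rw [Set.range_comp, hrange]
    ext z
    obtain ⟨z, rfl⟩ := f.surjective z
    simp
  · simp [hq0, hf.1]
  · intro e
    rw [hE]
    exact (hmem _ _ _).symm

theorem red2s_iso {M M' N : Autom A} (h : Isomorphic M M')
    (hr : Relation.ReflTransGen Red2 M N) :
    ∃ N', Relation.ReflTransGen Red2 M' N' ∧ Isomorphic N N' := by
  induction hr with
  | refl => exact ⟨M', .refl, h⟩
  | @tail b c _ hbc ih =>
    obtain ⟨b', hb', hi⟩ := ih
    exact ⟨c, .tail hb' (red2_iso hi hbc),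
      ⟨Equiv.refl _, ⟨rfl, fun _ _ _ h => h⟩, ⟨rfl, fun _ _ _ h => h⟩⟩⟩

theorem expStep_transfer {M N P : Autom A} {p q p₁ q₁ : M.Q} {w w₁ : List (Ltr A)}
    (hM : M.Dual) (hw₁ : w₁ ≠ [])
    (heq : ∀ (P : Autom A) (ψ : M.Q → P.Q), P.Deterministic → P.Dual → M.IsHom P ψ →
      (P.Path (ψ p) w (ψ q) ↔ P.Path (ψ p₁) w₁ (ψ q₁)))
    (hP : P.Deterministic) (hPd : P.Dual) (ψ : M.Q → P.Q) (hψ : M.IsHom P ψ)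
    (hinj : Injective ψ) (hpath : P.Path (ψ p₁) w₁ (ψ q₁))
    (h : M.ExpStep p w q N) : M.ExpStep p₁ w₁ q₁ N := by
  obtain ⟨E, N'', hE, ⟨K, hEK, hK, hred, hfinal⟩, hiso⟩ := h
  have hU := univFold_congr heq (univFold_of hM hE (fold_of_red1s hEK) hK)
  obtain ⟨E', hE'⟩ := expansion_exists M p₁ q₁ w₁ hw₁
  obtain ⟨φ, hφ, -, -, hfin, hu, -⟩ := expansion_props hM hE'
  obtain ⟨g, hg, hgφ⟩ := hu P ψ hPd hψ hpath
  obtain ⟨K', hEK', hK'⟩ := fold_exists_aux hP _ E' φ g hfin rfl hg (by rwa [hgφ])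
  have hU' := univFold_of hM hE' (fold_of_red1s hEK') hK'
  obtain ⟨N', hN', hNN⟩ := red2s_iso (univFold_iso hU hU') hred
  exact ⟨E', N', hE', ⟨K', hEK', hK', hN', fun L hL => hfinal L (red2_iso (iso_symm hNN) hL)⟩,
    iso_trans (iso_symm hNN) hiso⟩

/-! ### A deterministic automaton containing `M` and the new path -/

theorem add_edge {M : Autom A} (hd : M.Deterministic) (hdu : M.Dual) (p q : M.Q) (a : Ltr A)
    (hp : ∀ s, (p, a, s) ∉ M.E) (hq : ∀ s, (s, a, q) ∉ M.E) :
    ∃ (P : Autom A) (ψ : M.Q → P.Q), P.Deterministic ∧ P.Dual ∧ M.IsHom P ψ ∧ Injective ψ ∧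
      (ψ p, a, ψ q) ∈ P.E := by
  have hq' : ∀ s, (q, Ltr.inv a, s) ∉ M.E := fun s h => hq s ((hdu _ _ _).2 h)
  refine ⟨⟨M.Q, M.q0, {e | e ∈ M.E ∨ e = (p, a, q) ∨ e = (q, Ltr.inv a, p)}⟩, id, ?_, ?_,
    ⟨rfl, fun _ _ _ h => Or.inl h⟩, injective_id, Or.inr (Or.inl rfl)⟩
  · intro (x : M.Q) b (y : M.Q) (y' : M.Q) h h'
    simp only [Set.mem_ofPred_eq, Prod.mk.injEq] at h h'
    rcases h with h | ⟨rfl, rfl, rfl⟩ | ⟨rfl, rfl, rfl⟩ <;>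
      rcases h' with h' | ⟨h1, h2, h3⟩ | ⟨h1, h2, h3⟩
    · exact hd _ _ _ _ h h'
    · subst h1 h2; exact absurd h (hp _)
    · subst h1 h2; exact absurd h (hq' _)
    · exact absurd h' (hp _)
    · exact h3.symm
    · exact absurd h2.symm (ltr_inv_ne _)
    · exact absurd h' (hq' _)
    · exact absurd h2 (ltr_inv_ne _)
    · exact h3.symm
  · have key : ∀ x b y, ((x, b, y) ∈ M.E ∨ (x, b, y) = (p, a, q) ∨ (x, b, y) = (q, Ltr.inv a, p))
        → ((y, Ltr.inv b, x) ∈ M.E ∨ (y, Ltr.inv b, x) = (p, a, q) ∨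
          (y, Ltr.inv b, x) = (q, Ltr.inv a, p)) := by
      intro x b y h
      rcases h with h | h | h
      · exact Or.inl ((hdu _ _ _).1 h)
      · simp only [Prod.mk.injEq] at h
        obtain ⟨rfl, rfl, rfl⟩ := h
        exact Or.inr (Or.inr rfl)
      · simp only [Prod.mk.injEq] at h
        obtain ⟨rfl, rfl, rfl⟩ := h
        exact Or.inr (Or.inl (by rw [ltr_inv_inv]))
    intro x b y
    refine ⟨key x b y, fun h => ?_⟩
    have := key _ _ _ h
    rwa [ltr_inv_inv] at this

theorem add_pendant {M : Autom A} (hd : M.Deterministic) (hdu : M.Dual) (p : M.Q) (a : Ltr A)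
    (hp : ∀ s, (p, a, s) ∉ M.E) :
    ∃ (P : Autom A) (ψ : M.Q → P.Q) (r : P.Q), P.Deterministic ∧ P.Dual ∧ M.IsHom P ψ ∧
      Injective ψ ∧ (ψ p, a, r) ∈ P.E ∧ (∀ b s, (r, b, s) ∈ P.E → b = Ltr.inv a) ∧
      (∀ b s, (s, b, r) ∈ P.E → b = a) ∧
      (∀ b s x, (s, b, ψ x) ∈ P.E → (∃ y, (y, b, x) ∈ M.E) ∨ (x = p ∧ b = Ltr.inv a)) := by
  let F : Set (Option M.Q × Ltr A × Option M.Q) :=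
    {e | (∃ e' ∈ M.E, e = (some e'.1, e'.2.1, some e'.2.2)) ∨
      e = (some p, a, none) ∨ e = (none, Ltr.inv a, some p)}
  refine ⟨⟨Option M.Q, some M.q0, F⟩, some, none, ?_, ?_,
    ⟨rfl, fun _ _ _ h => Or.inl ⟨_, h, rfl⟩⟩, Option.some_injective _, Or.inr (Or.inl rfl),
    ?_, ?_, ?_⟩
  · rintro x b y y' h h'
    simp only [F, Set.mem_ofPred_eq, Prod.mk.injEq] at h h'
    rcases h with ⟨⟨x1, b1, y1⟩, he, rfl, rfl, rfl⟩ | ⟨rfl, rfl, rfl⟩ | ⟨rfl, rfl, rfl⟩ <;>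
      rcases h' with ⟨⟨x2, b2, y2⟩, he', h1, h2, h3⟩ | ⟨h1, h2, h3⟩ | ⟨h1, h2, h3⟩
    · simp only [Option.some.injEq] at h1 h2
      subst h1 h2 h3
      exact congrArg some (hd _ _ _ _ he he')
    · simp only [Option.some.injEq] at h1 h2
      subst h1 h2
      exact absurd he (hp _)
    · cases h1
    · simp only [Option.some.injEq] at h1 h2
      subst h1 h2
      exact absurd he' (hp _)
    · exact h3.symm
    · cases h1
    · cases h1
    · cases h1
    · exact h3.symm
  · have key : ∀ x b y, (x, b, y) ∈ F → (y, Ltr.inv b, x) ∈ F := by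
      intro x b y h
      rcases h with ⟨⟨x1, b1, y1⟩, he, h⟩ | h | h
      · simp only [Prod.mk.injEq] at h
        obtain ⟨rfl, rfl, rfl⟩ := h
        exact Or.inl ⟨_, (hdu _ _ _).1 he, rfl⟩
      · simp only [Prod.mk.injEq] at h
        obtain ⟨rfl, rfl, rfl⟩ := h
        exact Or.inr (Or.inr rfl)
      · simp only [Prod.mk.injEq] at h
        obtain ⟨rfl, rfl, rfl⟩ := h
        exact Or.inr (Or.inl (by rw [ltr_inv_inv]))
    intro x b y
    refine ⟨key x b y, fun h => ?_⟩
    have := key _ _ _ h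
    rwa [ltr_inv_inv] at this
  · rintro b s (⟨⟨x1, b1, y1⟩, he, h⟩ | h | h)
    · simp at h
    · simp at h
    · simp only [Prod.mk.injEq] at h; exact h.2.1
  · rintro b s (⟨⟨x1, b1, y1⟩, he, h⟩ | h | h)
    · simp at h
    · simp only [Prod.mk.injEq] at h; exact h.2.1
    · simp at h
  · rintro b s x (⟨⟨x1, b1, y1⟩, he, h⟩ | h | h)
    · simp only [Prod.mk.injEq, Option.some.injEq] at h
      obtain ⟨-, rfl, rfl⟩ := h
      exact Or.inl ⟨_, he⟩
    · simp at h
    · simp only [Prod.mk.injEq, Option.some.injEq] at h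
      exact Or.inr ⟨h.2.2, h.2.1⟩

theorem reduced_infix {x y z : List (Ltr A)} (h : IsReducedWord (x ++ y ++ z)) :
    IsReducedWord y := by
  intro s t a b hy
  refine h (x ++ s) (t ++ z) a b ?_
  simp [hy]

theorem reduced_pair {x y : List (Ltr A)} {a b : Ltr A}
    (h : IsReducedWord (x ++ a :: b :: y)) : b ≠ Ltr.inv a := by
  rintro rfl
  exact h x y a.1 a.2 rfl

theorem separate (n : ℕ) : ∀ (M : Autom A) (_ : M.Deterministic) (_ : M.Dual) (p q : M.Q)
    (w : List (Ltr A)), w.length = n → w ≠ [] → IsReducedWord w →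
    (∀ a t, w = a :: t → ∀ s, (p, a, s) ∉ M.E) →
    (∀ a t, w = t ++ [a] → ∀ s, (s, a, q) ∉ M.E) →
    ∃ (P : Autom A) (ψ : M.Q → P.Q), P.Deterministic ∧ P.Dual ∧ M.IsHom P ψ ∧ Injective ψ ∧
      P.Path (ψ p) w (ψ q) := by
  induction n using Nat.strong_induction_on with
  | _ n ih =>
  intro M hd hdu p q w hn hw hred hp hq
  obtain ⟨a, t, rfl⟩ := List.exists_cons_of_ne_nil hw
  have hpa := hp a t rfl
  by_cases ht : t = []
  · subst ht
    obtain ⟨P, ψ, h1, h2, h3, h4, h5⟩ := add_edge hd hdu p q a hpa (hq a [] rfl)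
    exact ⟨P, ψ, h1, h2, h3, h4, path_single.2 h5⟩
  obtain ⟨t', l, rfl⟩ : ∃ t' l, t = t' ++ [l] :=
    ⟨t.dropLast, t.getLast ht, (List.dropLast_append_getLast ht).symm⟩
  obtain ⟨P, ψ, r, h1, h2, h3, h4, h5, h6, h7, h8⟩ := add_pendant hd hdu p a hpa
  by_cases hc : q = p ∧ l = Ltr.inv a
  · obtain ⟨rfl, rfl⟩ := hc
    have ht' : t' ≠ [] := by
      rintro rfl
      exact reduced_pair (x := []) (y := []) hred rfl
    obtain ⟨P', ψ', k1, k2, k3, k4, k5⟩ := ih t'.length (by rw [← hn]; simp) P h1 h2 r r t' rfl ht'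
      (reduced_infix (x := [a]) (z := [Ltr.inv a]) (by simpa using hred))
      (by
        rintro b t'' rfl s hs
        have := h6 _ _ hs
        exact reduced_pair (x := []) (y := t'' ++ [Ltr.inv a]) (by simpa using hred) this)
      (by
        rintro b t'' rfl s hs
        have := h7 _ _ hs
        subst this
        exact reduced_pair (x := b :: t'') (y := []) (by simpa using hred) rfl)
    refine ⟨P', ψ' ∘ ψ, k1, k2, hom_comp h3 k3, k4.comp h4, ?_⟩
    refine .cons (k3.2 _ _ _ h5) (path_append.2 ⟨ψ' r, k5, path_single.2 ?_⟩)
    exact k3.2 _ _ _ ((h2 _ _ _).1 h5)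
  · obtain ⟨P', ψ', k1, k2, k3, k4, k5⟩ := ih (t' ++ [l]).length (by rw [← hn]; simp) P h1 h2
      r (ψ q) (t' ++ [l]) rfl ht
      (reduced_infix (x := [a]) (z := []) (by simpa using hred))
      (by
        intro b t'' hb s hs
        have := h6 _ _ hs
        rw [hb] at hred
        exact reduced_pair (x := []) (y := t'') hred this)
      (by
        intro b t'' hb s hs
        obtain ⟨rfl, hb'⟩ := List.append_inj' hb rfl
        simp only [List.cons.injEq, and_true] at hb'
        subst hb'
        rcases h8 _ _ _ hs with ⟨y, hy⟩ | h
        · exact hq l (a :: t') rfl y hy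
        · exact hc h)
    exact ⟨P', ψ' ∘ ψ, k1, k2, hom_comp h3 k3, k4.comp h4, .cons (k3.2 _ _ _ h5) k5⟩

/-! ### Type 2 reductions do not delete states of `M` -/

theorem red2_embed {M K L : Autom A} (hMred : M.IsRed) (h : Red2 K L)
    (φ : M.Q → K.Q) (hφ : M.IsHom K φ) (hinj : Injective φ) :
    ∃ φ' : M.Q → L.Q, M.IsHom L φ' ∧ Injective φ' := by
  obtain ⟨r, s, a, hs0, h1, h2, h3, σ, hσ, hrange, hσ0, hE⟩ := h
  have hne : ∀ x, φ x ≠ s := by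
    rintro x rfl
    obtain ⟨u, v, huv, hu, hv⟩ := hMred x
    have hx0 : x ≠ M.q0 := by rintro rfl; exact hs0 hφ.1
    by_cases hrs : r = φ x
    · -- only self-loops at `φ x`
      have key : ∀ y w z, M.Path y w z → z = x → y = x := by
        intro y w z hp
        unfold Path at hp
        induction hp with
        | nil => exact id
        | cons he _ ih =>
          intro hz
          have := ih hz
          subst this
          rcases h3 _ (hφ.2 _ _ _ he) (Or.inr rfl) with h | h
          · simp only [Prod.mk.injEq] at h
            exact hinj (h.1.trans hrs)
          · simp only [Prod.mk.injEq] at h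
            exact hinj h.1
      exact hx0 (key _ _ _ hu rfl).symm
    · have hu0 : u ≠ [] := by rintro rfl; cases hu; exact hx0 rfl
      have hv0 : v ≠ [] := by rintro rfl; cases hv; exact hx0 rfl
      obtain ⟨u', b, rfl⟩ : ∃ t' l, u = t' ++ [l] :=
        ⟨u.dropLast, u.getLast hu0, (List.dropLast_append_getLast hu0).symm⟩
      obtain ⟨c, v', rfl⟩ := List.exists_cons_of_ne_nil hv0
      obtain ⟨y, -, hy⟩ := path_append.1 hu
      have hb := hφ.2 _ _ _ (path_single.1 hy)
      have hb' : b = a := by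
        rcases h3 _ hb (Or.inr rfl) with h | h
        · simp only [Prod.mk.injEq] at h; exact h.2.1
        · simp only [Prod.mk.injEq] at h; exact absurd h.2.2.symm hrs
      cases hv with
      | cons hc _ =>
        have hc' : c = Ltr.inv a := by
          rcases h3 _ (hφ.2 _ _ _ hc) (Or.inl rfl) with h | h
          · simp only [Prod.mk.injEq] at h; exact absurd h.1.symm hrs
          · simp only [Prod.mk.injEq] at h; exact h.2.1
        subst hb' hc'
        exact reduced_pair (x := u') (y := v') (by simpa using huv) rfl
  have hex : ∀ x, ∃ y, σ y = φ x := by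
    intro x
    have : φ x ∈ Set.range σ := by rw [hrange]; exact hne x
    exact this
  choose f hf using hex
  refine ⟨f, ⟨hσ (by rw [hf, hσ0, hφ.1]), ?_⟩, ?_⟩
  · intro x b y h
    rw [hE]
    simp only [hf]
    exact hφ.2 _ _ _ h
  · intro x y hxy
    apply hinj
    rw [← hf, ← hf, hxy]

theorem red2s_embed {M K L : Autom A} (hMred : M.IsRed) (h : Relation.ReflTransGen Red2 K L)
    (hφ : ∃ φ : M.Q → K.Q, M.IsHom K φ ∧ Injective φ) :
    ∃ φ' : M.Q → L.Q, M.IsHom L φ' ∧ Injective φ' := by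
  induction h with
  | refl => exact hφ
  | tail _ hbc ih =>
    obtain ⟨φ, h1, h2⟩ := ih
    exact red2_embed hMred hbc φ h1 h2

end Autom

open Autom in
/-- Fact 2.2 (1): if `w = u w' v` where `u` is the longest prefix of `w` readable
from `p` and `v` the longest suffix readable into `q`, and `w'` is nonempty, then
`M →exp^{(p,w,q)} N` iff `M →exp^{(p',w',q')} N`, and the latter is a reduced
expansion. -/
theorem expstep_case_reduced_expansion
    {A : Type} (M : Autom A) (hMinv : M.IsInv) (hMred : M.IsRed)
    (p q : M.Q) (w u v w' : List (Ltr A)) (hw : w ≠ []) (hwred : IsReducedWord w)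
    (hsplit : w = u ++ w' ++ v) (hw' : w' ≠ [])
    (p' q' : M.Q) (hu : M.Path p u p') (hv : M.Path q' v q)
    (humax : ∀ u₁, u₁ <+: w → (∃ s, M.Path p u₁ s) → u₁.length ≤ u.length)
    (hvmax : ∀ v₁, v₁ <:+ w → (∃ s, M.Path s v₁ q) → v₁.length ≤ v.length)
    (N : Autom A) (hNinv : N.IsInv) (hNred : N.IsRed) :
    (M.ExpStep p w q N ↔ M.ExpStep p' w' q' N) ∧
      (M.ExpStep p' w' q' N → M.REStep p' w' q' N) := by
  obtain ⟨hd, -, hdu⟩ := hMinv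
  have heq : ∀ (P : Autom A) (ψ : M.Q → P.Q), P.Deterministic → P.Dual → M.IsHom P ψ →
      (P.Path (ψ p) w (ψ q) ↔ P.Path (ψ p') w' (ψ q')) := by
    intro P ψ hP hPd hψ
    have hu' := path_hom hψ hu
    have hv' := path_hom hψ hv
    rw [hsplit]
    constructor
    · intro h
      obtain ⟨y, h1, h2⟩ := path_append.1 h
      obtain ⟨x, h3, h4⟩ := path_append.1 h1
      rw [path_det hP hu' h3, path_codet hP hPd hv' h2]
      exact h4
    · intro h
      exact path_append.2 ⟨_, path_append.2 ⟨_, hu', h⟩, hv'⟩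
  obtain ⟨P, ψ, hP, hPd, hψ, hinj, hpath⟩ := separate _ M hd hdu p' q' w' rfl hw'
    (reduced_infix (hsplit ▸ hwred))
    (by
      rintro a t rfl s hs
      have := humax (u ++ [a]) ⟨t ++ v, by simp [hsplit]⟩
        ⟨s, path_append.2 ⟨_, hu, path_single.2 hs⟩⟩
      simp at this)
    (by
      rintro a t rfl s hs
      have := hvmax (a :: v) ⟨u ++ t, by simp [hsplit]⟩ ⟨s, .cons hs hv⟩
      simp at this)
  refine ⟨⟨?_, ?_⟩, ?_⟩
  · exact expStep_transfer hdu hw' heq hP hPd ψ hψ hinj hpath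
  · exact expStep_transfer hdu hw (fun P ψ h1 h2 h3 => (heq P ψ h1 h2 h3).symm) hP hPd ψ hψ hinj
      ((heq P ψ hP hPd hψ).2 hpath)
  · intro h
    refine ⟨h, ?_⟩
    obtain ⟨E, N'', hE, ⟨K, hEK, hK, hred, -⟩, f, hf, -⟩ := h
    obtain ⟨-, -, φ, hφ, -, hu, -⟩ := univFold_of hdu hE (fold_of_red1s hEK) hK
    obtain ⟨g, -, hgφ⟩ := hu P ψ hP hPd hψ hpath
    obtain ⟨φ', h1, h2⟩ := red2s_embed hMred hred
      ⟨φ, hφ, Injective.of_comp (f := g) (by rwa [hgφ])⟩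
    exact ⟨f ∘ φ', f.injective.comp h2, hom_comp h1 hf⟩
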